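/- Let h_0,…,h_{2n−1} ∈ K, let H = (h_{i+j−2})_{1≤i,j≤n} and H_A = (h_{i+j−1})_{1≤i,j≤n}, and assume det H ≠ 0 and det H_A ≠ 0. Let D ∈ K[X_0,…,X_{2n−1}] be the determinant of the Hankel matrix (X_{i+j−2}) and D_A the determinant of the Hankel matrix (X_{i+j−1}), both viewed as polynomials in X_0,…,X_{2n−1}. Then for every 0 ≤ k ≤ 2n−1, the value at (h_0,…,h_{2n−1}) of the partial derivative of the quotient D_A/D with respect to X_k, namely ((∂D_A/∂X_k)·det H − (∂D/∂X_k)·det H_A)·(det H)^{−2}, equals (σ_{k−1}(H_A^{−1}) − σ_k(H^{−1}))·(det H_A)·(det H)^{−1}. -/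

import Mathlib

open Matrix

/-- The `k`-th anti-diagonal sum of an `n × n` matrix `M` (0-based indexing), for an
integer index `k` (so that `σ_{-1}(M) = 0` and `σ_{2n-1}(M) = 0` hold by convention):
`σ_k(M) = Σ_{i+j=k} M i j`. -/
def antiDiagSumZ {K : Type*} [CommRing K] {n : ℕ} (M : Matrix (Fin n) (Fin n) K)
    (k : ℤ) : K :=
  ∑ i : Fin n, ∑ j : Fin n, if ((i : ℕ) : ℤ) + ((j : ℕ) : ℤ) = k then M i j else 0

/-!
By Jacobi's formula, the derivative of `det M` along a derivation is `∑ (adj M)ᵢⱼ • dMⱼᵢ`. For the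
generic Hankel matrix `(X_{i+j+c})`, the derivation `∂/∂X_k` turns the entries with `i + j = k - c`
into `1` and all others into `0`, so `∂ det / ∂X_k` is the `(k - c)`-th anti-diagonal sum of the
adjugate, that is, `det` times the anti-diagonal sum of the inverse. The quotient rule then combines
the cases `c = 0` and `c = 1`.
-/

section Jacobi

variable {R A N ι : Type*} [CommSemiring R]

theorem derivation_prod [CommSemiring A] [Algebra R A] [AddCommMonoid N] [Module A N] [Module R N]
    [DecidableEq ι] (D : Derivation R A N) (s : Finset ι) (f : ι → A) :
    D (∏ i ∈ s, f i) = ∑ i ∈ s, (∏ j ∈ s.erase i, f j) • D (f i) := by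
  induction s using Finset.induction_on with
  | empty => simp
  | insert a s ha ih =>
    have erase_insert_prod : ∀ i ∈ s,
        ∏ j ∈ (insert a s).erase i, f j = f a * ∏ j ∈ s.erase i, f j := by
      intro i hi
      have hai : a ≠ i := fun e => ha (e ▸ hi)
      rw [Finset.erase_insert_of_ne hai,
        Finset.prod_insert fun hc => ha (Finset.mem_of_mem_erase hc)]
    rw [Finset.prod_insert ha, D.leibniz, ih, Finset.sum_insert ha, Finset.erase_insert ha,
      add_comm, Finset.smul_sum]
    congr 1
    exact Finset.sum_congr rfl fun i hi => by rw [erase_insert_prod i hi, mul_smul]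

variable [CommRing A] [Fintype ι] [DecidableEq ι]

theorem adjugate_apply_eq_sum_perm (M : Matrix ι ι A) (i j : ι) :
    M.adjugate i j = ∑ σ : Equiv.Perm ι,
      if σ i = j then Equiv.Perm.sign σ • ∏ l ∈ Finset.univ.erase i, M (σ l) l else 0 := by
  have adjugate_eq_det : M.adjugate i j = (M.updateCol i (Pi.single j 1)).det := by
    rw [← cramer_apply, cramer_eq_adjugate_mulVec, mulVec_single_one, col_apply]
  rw [adjugate_eq_det, det_apply]
  refine Finset.sum_congr rfl fun σ _ => ?_
  have prod_off_col : ∏ l ∈ Finset.univ.erase i, M.updateCol i (Pi.single j 1) (σ l) l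
      = ∏ l ∈ Finset.univ.erase i, M (σ l) l :=
    Finset.prod_congr rfl fun l hl => by rw [updateCol_ne (Finset.ne_of_mem_erase hl)]
  rw [← Finset.prod_erase_mul _ _ (Finset.mem_univ i), prod_off_col, updateCol_self,
    Pi.single_apply, mul_ite, mul_one, mul_zero, smul_ite, smul_zero]

theorem derivation_det [Algebra R A] [AddCommGroup N] [Module A N] [Module R N]
    (D : Derivation R A N) (M : Matrix ι ι A) :
    D M.det = ∑ i, ∑ j, M.adjugate i j • D (M j i) := by
  have derivation_term (σ : Equiv.Perm ι) :
      D (Equiv.Perm.sign σ • ∏ i, M (σ i) i)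
        = ∑ i, (Equiv.Perm.sign σ • ∏ l ∈ Finset.univ.erase i, M (σ l) l) • D (M (σ i) i) := by
    simp only [Units.smul_def, map_zsmul, derivation_prod, Finset.smul_sum, smul_assoc]
  calc D M.det
      = ∑ i, ∑ σ : Equiv.Perm ι,
          (Equiv.Perm.sign σ • ∏ l ∈ Finset.univ.erase i, M (σ l) l) • D (M (σ i) i) := by
        rw [det_apply, map_sum, Finset.sum_comm]
        exact Finset.sum_congr rfl fun σ _ => derivation_term σ
    _ = ∑ i, ∑ j, M.adjugate i j • D (M j i) := by
        refine Finset.sum_congr rfl fun i _ => ?_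
        simp only [adjugate_apply_eq_sum_perm, Finset.sum_smul, ite_smul, zero_smul]
        rw [Finset.sum_comm]
        simp only [Finset.sum_ite_eq, Finset.mem_univ, if_true]

end Jacobi

section Hankel

variable {R : Type*} [CommRing R] {n : ℕ}

theorem eval_pderiv_det_X {ι τ : Type*} [Fintype ι] [DecidableEq ι] [DecidableEq τ]
    (f : ι → ι → τ) (x : τ → R) (k : τ) :
    MvPolynomial.eval x (MvPolynomial.pderiv k
        (of fun i j => (MvPolynomial.X (f i j) : MvPolynomial τ R)).det)
      = ∑ i, ∑ j, if f j i = k then (of fun i j => x (f i j)).adjugate i j else 0 := by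
  set M : Matrix ι ι (MvPolynomial τ R) := of fun i j => MvPolynomial.X (f i j)
  have eval_adjugate (i j : ι) :
      MvPolynomial.eval x (M.adjugate i j) = (of fun i j => x (f i j)).adjugate i j := by
    have eval_M : (MvPolynomial.eval x).mapMatrix M = of fun i j => x (f i j) := by
      ext i j
      simp [M]
    rw [← eval_M, ← RingHom.map_adjugate]
    rfl
  simp only [derivation_det, M, of_apply, MvPolynomial.pderiv_X, Pi.single_apply, smul_eq_mul,
    mul_ite, mul_one, mul_zero, map_sum, apply_ite (MvPolynomial.eval x), map_zero]
  simp only [← eval_adjugate, M]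

theorem antiDiagSumZ_smul (c : R) (M : Matrix (Fin n) (Fin n) R) (k : ℤ) :
    antiDiagSumZ (c • M) k = c * antiDiagSumZ M k := by
  simp only [antiDiagSumZ, Matrix.smul_apply, smul_eq_mul, Finset.mul_sum, mul_ite, mul_zero]

theorem antiDiagSumZ_adjugate {M : Matrix (Fin n) (Fin n) R} (hM : IsUnit M.det) (k : ℤ) :
    antiDiagSumZ M.adjugate k = M.det * antiDiagSumZ M⁻¹ k := by
  rw [← antiDiagSumZ_smul, inv_def, smul_smul, Ring.mul_inverse_cancel _ hM, one_smul]

/-- The `n × n` Hankel matrix `(a_{i+j})` of a sequence `a`, with 0-based indices. The paper's `H`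
and `H_A` are the Hankel matrices of `h` and of its shift `m ↦ h (m + 1)`, and `D`, `D_A` are the
determinants of those of `m ↦ X_m` and `m ↦ X_{m+1}`. -/
def hankelMatrix {S : Type*} (n : ℕ) (a : ℕ → S) : Matrix (Fin n) (Fin n) S :=
  of fun i j => a (i + j)

theorem eval_pderiv_det_hankelMatrix_X (n : ℕ) (h : ℕ → R) (c k : ℕ) :
    MvPolynomial.eval h (MvPolynomial.pderiv k
        (hankelMatrix n fun m => (MvPolynomial.X (m + c) : MvPolynomial ℕ R)).det)
      = antiDiagSumZ (hankelMatrix n fun m => h (m + c)).adjugate (k - c) := by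
  have index_iff (i j : Fin n) : (j : ℕ) + i + c = k ↔ ((i : ℕ) : ℤ) + (j : ℕ) = k - c := by omega
  simp only [hankelMatrix, eval_pderiv_det_X, antiDiagSumZ, index_iff]

open scoped Ring in
theorem pderiv_det_quotient_eq_antiDiagSum_inv_general (h : ℕ → R)
    {H HA : Matrix (Fin n) (Fin n) R}
    (hH : H = hankelMatrix n h) (hHA : HA = hankelMatrix n fun m => h (m + 1))
    (hdetH : IsUnit H.det) (hdetHA : IsUnit HA.det) (k : ℕ) :
    (MvPolynomial.eval h (MvPolynomial.pderiv k
          (hankelMatrix n fun m => (MvPolynomial.X (m + 1) : MvPolynomial ℕ R)).det) * H.det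
        - MvPolynomial.eval h (MvPolynomial.pderiv k
          (hankelMatrix n fun m => (MvPolynomial.X m : MvPolynomial ℕ R)).det) * HA.det)
      * (H.det ^ 2)⁻¹ʳ
    = (antiDiagSumZ HA⁻¹ (k - 1) - antiDiagSumZ H⁻¹ k) * HA.det * H.det⁻¹ʳ := by
  have pderiv_DA := eval_pderiv_det_hankelMatrix_X n h 1 k
  have pderiv_D := eval_pderiv_det_hankelMatrix_X n h 0 k
  simp only [← hHA, Nat.cast_one, antiDiagSumZ_adjugate hdetHA] at pderiv_DA
  simp only [add_zero, ← hH, Nat.cast_zero, sub_zero, antiDiagSumZ_adjugate hdetH] at pderiv_D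
  have det_mul_inverse : H.det * H.det⁻¹ʳ = 1 := Ring.mul_inverse_cancel _ hdetH
  rw [pderiv_DA, pderiv_D, ← Ring.inverse_pow]
  linear_combination
    (antiDiagSumZ HA⁻¹ (k - 1) - antiDiagSumZ H⁻¹ k) * HA.det * H.det⁻¹ʳ * det_mul_inverse

end Hankel

/-- Let `H = (h_{i+j-2})` and `H_A = (h_{i+j-1})` be non-singular, and let
`D` and `D_A` be the determinants of the generic Hankel matrices `(X_{i+j-2})` and
`(X_{i+j-1})` respectively (0-based: `(X_{i+j})` and `(X_{i+j+1})`).  Then for every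
`0 ≤ k ≤ 2n-1`, the value at `(h_0, …, h_{2n-1})` of the partial derivative of the
quotient `D_A/D` with respect to `X_k`, namely
`((∂D_A/∂X_k)·det H − (∂D/∂X_k)·det H_A)·(det H)⁻²`, equals
`(σ_{k-1}(H_A⁻¹) − σ_k(H⁻¹))·(det H_A)·(det H)⁻¹`. -/
theorem pderiv_det_quotient_eq_antiDiagSum_inv {K : Type*} [Field K] {n : ℕ}
    (hn : 1 ≤ n) (h : ℕ → K)
    (H HA : Matrix (Fin n) (Fin n) K)
    (hH : ∀ i j, H i j = h ((i : ℕ) + (j : ℕ)))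
    (hHA : ∀ i j, HA i j = h ((i : ℕ) + (j : ℕ) + 1))
    (hdetH : H.det ≠ 0) (hdetHA : HA.det ≠ 0)
    (k : ℕ) (hk : k ≤ 2 * n - 1) :
    (MvPolynomial.eval h
        (MvPolynomial.pderiv k
          (Matrix.det (Matrix.of fun i j : Fin n =>
            (MvPolynomial.X ((i : ℕ) + (j : ℕ) + 1) : MvPolynomial ℕ K)))) * H.det
      - MvPolynomial.eval h
          (MvPolynomial.pderiv k
            (Matrix.det (Matrix.of fun i j : Fin n =>
              (MvPolynomial.X ((i : ℕ) + (j : ℕ)) : MvPolynomial ℕ K)))) * HA.det)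
      * (H.det ^ 2)⁻¹
    = (antiDiagSumZ HA⁻¹ ((k : ℤ) - 1) - antiDiagSumZ H⁻¹ (k : ℤ))
        * HA.det * (H.det)⁻¹ := by
  simpa only [hankelMatrix, Ring.inverse_eq_inv'] using
    pderiv_det_quotient_eq_antiDiagSum_inv_general h (Matrix.ext hH) (Matrix.ext hHA)
      hdetH.isUnit hdetHA.isUnit k
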